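/- arXiv:0705.4618 — 2 statements merged into one kernel-verified Lean document; each statement's English description precedes it below -/
import Mathlib

section
/- Let G = (𝒩, w) be a closed integer octagonal graph. Define w_t by w_t(i,ī) = 2⌊w(i,ī)/2⌋ for all i ∈ 𝒩 and w_t(i,j) = w(i,j) whenever j ≠ ī, and define w_T by w_T(i,j) = min{ w(i,j), ⌊w(i,ī)/2⌋ + ⌊w(j̄,j)/2⌋ }. If w_t(i,ī) + w_t(ī,i) ≥ 0 for all i ∈ 𝒩, then w_T is an octagonal graph (i.e., w_T is consistent and coherent). -/
/-- Extended rationals: ℚ ∪ {+∞}. -/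
abbrev Qinf := WithTop ℚ

/-- Weight of a path (list of nodes): sum of the weights of its arcs. -/
def pathWeight {N : Type*} (w : N → N → Qinf) : List N → Qinf
  | [] => 0
  | [_] => 0
  | a :: b :: l => w a b + pathWeight w (b :: l)

/-- A proper cycle: at least two arcs, first node equals last node,
    consecutive nodes distinct. -/
def IsProperCycle {N : Type*} (l : List N) : Prop :=
  3 ≤ l.length ∧ l.head? = l.getLast? ∧ l.Chain' (· ≠ ·)

/-- A graph is consistent if it has no proper cycle of negative weight. -/
def Consistent {N : Type*} (w : N → N → Qinf) : Prop :=
  ∀ l : List N, IsProperCycle l → 0 ≤ pathWeight w l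

/-- A consistent graph is closed if self-loops have weight 0 and the
    triangle inequality holds. -/
def ClosedG {N : Type*} (w : N → N → Qinf) : Prop :=
  Consistent w ∧ (∀ i, w i i = 0) ∧ ∀ i j k, w i j ≤ w i k + w k j

/-- The "bar" involution on nodes: ī = i+1 for even i, ī = i-1 for odd i. -/
def bar {n : ℕ} (i : Fin (2 * n)) : Fin (2 * n) :=
  if _h : i.val % 2 = 0 then ⟨i.val + 1, by have := i.isLt; omega⟩
  else ⟨i.val - 1, by have := i.isLt; omega⟩

/-- Coherence: w(i,j) = w(j̄,ī). -/
def Coherent {n : ℕ} (w : Fin (2 * n) → Fin (2 * n) → Qinf) : Prop :=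
  ∀ i j, w i j = w (bar j) (bar i)

/-- An octagonal graph: consistent and coherent. -/
def Octagonal {n : ℕ} (w : Fin (2 * n) → Fin (2 * n) → Qinf) : Prop :=
  Consistent w ∧ Coherent w

/-- Pointwise order on graphs. -/
def GLe {n : ℕ} (w₁ w₂ : Fin (2 * n) → Fin (2 * n) → Qinf) : Prop :=
  ∀ i j, w₁ i j ≤ w₂ i j

/-- Halving on ℚ∞ (with +∞/2 = +∞). -/
def half (x : Qinf) : Qinf := x.map (fun q => q / 2)

/-- Floored halving on ℚ∞ (with ⌊+∞/2⌋ = +∞). -/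
def fhalf (x : Qinf) : Qinf := x.map (fun q => ((⌊q / 2⌋ : ℤ) : ℚ))

/-- Integer weights: every weight is an integer or +∞. -/
def IntWeights {n : ℕ} (w : Fin (2 * n) → Fin (2 * n) → Qinf) : Prop :=
  ∀ i j, w i j = ⊤ ∨ ∃ d : ℤ, w i j = ((d : ℚ) : Qinf)

/-- A strongly closed octagonal graph. -/
def StronglyClosed {n : ℕ} (w : Fin (2 * n) → Fin (2 * n) → Qinf) : Prop :=
  Octagonal w ∧ ClosedG w ∧ ∀ i j, 2 * w i j ≤ w i (bar i) + w (bar j) j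

/-- A tightly closed integer octagonal graph. -/
def TightlyClosed {n : ℕ} (w : Fin (2 * n) → Fin (2 * n) → Qinf) : Prop :=
  IntWeights w ∧ StronglyClosed w ∧
    ∀ i, w i (bar i) = ⊤ ∨ ∃ d : ℤ, w i (bar i) = (((2 * d : ℤ) : ℚ) : Qinf)

/-!
Taking `f i = ⌊w(i,ī)/2⌋` and `g j = ⌊w(j̄,j)/2⌋`, the graph `w_T` records the cheaper of the
direct arc and the route `i → * → j` through one extra node `*`, with arcs `i → *` of weight `f i`
and `* → j` of weight `g j` (in the octagon reading, `*` is the constant zero). By closure and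
coherence `w(i,ī) ≤ 2 w(i,k) + w(k,k̄)`, and integrality of `w(i,k)` lets this inequality survive
floored halving: `f i ≤ w(i,k) + f k`, and dually for `g`. The condition on `w_t` says exactly that
no cycle `i → * → i` is negative. Hence `w_T` satisfies the triangle inequality with zero loops,
which bounds every cycle weight below by a loop weight.
-/

section Triangle

variable {N : Type*} {w : N → N → Qinf}

theorem le_pathWeight_of_triangle (hloop : ∀ i, w i i = 0)
    (htri : ∀ i j k, w i j ≤ w i k + w k j) {a b : N} {l : List N}
    (hb : (a :: l).getLast? = some b) : w a b ≤ pathWeight w (a :: l) := by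
  induction l generalizing a with
  | nil =>
    obtain rfl : a = b := by simpa only [List.getLast?_singleton, Option.some.injEq] using hb
    exact (hloop a).le
  | cons c l ih =>
    rw [List.getLast?_cons_cons] at hb
    calc w a b ≤ w a c + w c b := htri a b c
      _ ≤ w a c + pathWeight w (c :: l) := by gcongr; exact ih hb

theorem consistent_of_triangle (hloop : ∀ i, w i i = 0)
    (htri : ∀ i j k, w i j ≤ w i k + w k j) : Consistent w := by
  rintro (_ | ⟨a, l⟩) ⟨hlen, hends, -⟩
  · exact absurd hlen (Nat.not_succ_le_zero 2)
  · calc 0 = w a a := (hloop a).symm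
      _ ≤ pathWeight w (a :: l) := le_pathWeight_of_triangle hloop htri hends.symm

end Triangle

section Detour

/-- The distances obtained from `w` by adjoining one node, with an arc of weight `f i` from each `i`
and an arc of weight `g j` to each `j`: the direct arc competes with the route through that node. -/
def detour {N M : Type*} [Add M] [Min M] (w : N → N → M) (f g : N → M) (i j : N) : M :=
  min (w i j) (f i + g j)

section OrderedMonoid

variable {N M : Type*} [AddCommMonoid M] [LinearOrder M] {w : N → N → M} {f g : N → M}

theorem detour_eq_or (i j : N) : detour w f g i j = w i j ∨ detour w f g i j = f i + g j :=
  min_choice _ _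

theorem detour_self {i : N} (hloop : w i i = 0) (hcycle : 0 ≤ f i + g i) :
    detour w f g i i = 0 := by
  rw [detour, hloop, min_eq_left hcycle]

theorem detour_triangle [IsOrderedAddMonoid M] (htri : ∀ i j k, w i j ≤ w i k + w k j)
    (hf : ∀ i k, f i ≤ w i k + f k) (hg : ∀ j k, g j ≤ g k + w k j)
    (hcycle : ∀ k, 0 ≤ f k + g k) (i j k : N) :
    detour w f g i j ≤ detour w f g i k + detour w f g k j := by
  have direct : detour w f g i j ≤ w i j := min_le_left _ _
  have via : detour w f g i j ≤ f i + g j := min_le_right _ _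
  obtain hik | hik := detour_eq_or (w := w) (f := f) (g := g) i k <;>
    obtain hkj | hkj := detour_eq_or (w := w) (f := f) (g := g) k j <;>
    rw [hik, hkj]
  · exact direct.trans (htri i j k)
  · calc detour w f g i j ≤ f i + g j := via
      _ ≤ (w i k + f k) + g j := by gcongr; exact hf i k
      _ = w i k + (f k + g j) := add_assoc _ _ _
  · calc detour w f g i j ≤ f i + g j := via
      _ ≤ f i + (g k + w k j) := by gcongr; exact hg j k
      _ = (f i + g k) + w k j := (add_assoc _ _ _).symm
  · calc detour w f g i j ≤ f i + g j := via
      _ ≤ (f i + g j) + (f k + g k) := le_add_of_nonneg_right (hcycle k)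
      _ = (f i + g k) + (f k + g j) := by ac_rfl

theorem detour_coherent {σ : N → N} (hw : ∀ i j, w i j = w (σ j) (σ i))
    (hfg : ∀ i, f (σ i) = g i) (hgf : ∀ i, g (σ i) = f i) (i j : N) :
    detour w f g i j = detour w f g (σ j) (σ i) := by
  rw [detour, detour, ← hw i j, hfg, hgf, add_comm (f i)]

end OrderedMonoid

theorem closedG_detour {N : Type*} {w : N → N → Qinf} {f g : N → Qinf} (hw : ClosedG w)
    (hf : ∀ i k, f i ≤ w i k + f k) (hg : ∀ j k, g j ≤ g k + w k j)
    (hcycle : ∀ k, 0 ≤ f k + g k) : ClosedG (detour w f g) := by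
  obtain ⟨-, hloop, htri⟩ := hw
  have hloop' (i : N) : detour w f g i i = 0 := detour_self (hloop i) (hcycle i)
  have htri' := detour_triangle htri hf hg hcycle
  exact ⟨consistent_of_triangle hloop' htri', hloop', htri'⟩

end Detour

section FlooredHalf

theorem fhalf_le_add_fhalf {x y z : Qinf} (hz : z = ⊤ ∨ ∃ d : ℤ, z = ((d : ℚ) : Qinf))
    (h : x ≤ z + (y + z)) : fhalf x ≤ z + fhalf y := by
  obtain rfl | ⟨d, rfl⟩ := hz
  · simp only [top_add, le_top]
  induction y using WithTop.recTopCoe with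
  | top => exact le_top
  | coe y =>
    induction x using WithTop.recTopCoe with
    | top => exact absurd h (by exact_mod_cast WithTop.not_top_le_coe _)
    | coe x =>
      have hx : x ≤ d + (y + d) := by exact_mod_cast h
      have hfloor : ⌊x / 2⌋ ≤ d + ⌊y / 2⌋ := by
        rw [← Int.floor_intCast_add]
        exact Int.floor_le_floor (by linarith)
      change ((⌊x / 2⌋ : ℚ) : Qinf) ≤ ((d : ℚ) : Qinf) + ((⌊y / 2⌋ : ℚ) : Qinf)
      exact_mod_cast hfloor

theorem two_mul_add_two_mul_nonneg_iff {x y : Qinf} : 0 ≤ 2 * x + 2 * y ↔ 0 ≤ x + y := by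
  induction x using WithTop.recTopCoe with
  | top => simp
  | coe x =>
    induction y using WithTop.recTopCoe with
    | top => simp
    | coe y =>
      have hcoe : (2 * x + 2 * y : Qinf) = ((2 * (x + y) : ℚ) : Qinf) := by
        rw [mul_add]; rfl
      rw [hcoe, ← WithTop.coe_add, WithTop.coe_nonneg, WithTop.coe_nonneg]
      exact mul_nonneg_iff_of_pos_left two_pos

theorem fhalf_le_add_fhalf_of_coherent {N : Type*} {σ : N → N} {w : N → N → Qinf}
    (hint : ∀ i j, w i j = ⊤ ∨ ∃ d : ℤ, w i j = ((d : ℚ) : Qinf))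
    (htri : ∀ i j k, w i j ≤ w i k + w k j) (hcoh : ∀ i j, w i j = w (σ j) (σ i)) (i k : N) :
    fhalf (w i (σ i)) ≤ w i k + fhalf (w k (σ k)) :=
  fhalf_le_add_fhalf (hint i k) <|
    calc w i (σ i) ≤ w i k + w k (σ i) := htri i (σ i) k
      _ ≤ w i k + (w k (σ k) + w (σ k) (σ i)) := by gcongr; exact htri k (σ i) (σ k)
      _ = w i k + (w k (σ k) + w i k) := by rw [← hcoh i k]

end FlooredHalf

theorem bar_involutive {n : ℕ} : Function.Involutive (bar (n := n)) := by
  intro i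
  apply Fin.ext
  have bar_val (k : Fin (2 * n)) :
      (bar k).val = if k.val % 2 = 0 then k.val + 1 else k.val - 1 := by
    unfold bar
    split_ifs <;> rfl
  rw [bar_val, bar_val]
  split_ifs <;> omega

theorem tight_closure_consistency_condition_general {N : Type*} {σ : N → N}
    (hσ : Function.Involutive σ) {w wT : N → N → Qinf}
    (hint : ∀ i j, w i j = ⊤ ∨ ∃ d : ℤ, w i j = ((d : ℚ) : Qinf)) (hcl : ClosedG w)
    (hcoh : ∀ i j, w i j = w (σ j) (σ i))
    (hwT : ∀ i j, wT i j = min (w i j) (fhalf (w i (σ i)) + fhalf (w (σ j) j)))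
    (hpos : ∀ i, 0 ≤ fhalf (w i (σ i)) + fhalf (w (σ i) i)) :
    ClosedG wT ∧ ∀ i j, wT i j = wT (σ j) (σ i) := by
  let f (i : N) : Qinf := fhalf (w i (σ i))
  let g (j : N) : Qinf := fhalf (w (σ j) j)
  obtain rfl : wT = detour w f g := funext₂ hwT
  have hfg (i : N) : f (σ i) = g i := by simp only [f, g, hσ i]
  have hgf (i : N) : g (σ i) = f i := by simp only [f, g, hσ i]
  have hf : ∀ i k, f i ≤ w i k + f k := fhalf_le_add_fhalf_of_coherent hint hcl.2.2 hcoh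
  have hg (j k : N) : g j ≤ g k + w k j := by
    rw [← hfg, ← hfg, hcoh k j, add_comm]
    exact hf (σ j) (σ k)
  exact ⟨closedG_detour hcl hf hg hpos, detour_coherent hcoh hfg hgf⟩

/-- Consistency check for the tight closure: if after tightening
    the unary constraints no pair (i,ī) exhibits a negative cycle, then the
    candidate tight closure is an octagonal graph. -/
theorem tight_closure_consistency_condition
    {n : ℕ} (hn : 1 ≤ n) (w : Fin (2 * n) → Fin (2 * n) → Qinf)
    (hoct : Octagonal w) (hint : IntWeights w) (hcl : ClosedG w)
    (wt wT : Fin (2 * n) → Fin (2 * n) → Qinf)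
    (hwt : ∀ i j, wt i j = if j = bar i then 2 * fhalf (w i j) else w i j)
    (hwT : ∀ i j, wT i j = min (w i j) (fhalf (w i (bar i)) + fhalf (w (bar j) j)))
    (hpos : ∀ i, 0 ≤ wt i (bar i) + wt (bar i) i) :
    Octagonal wT := by
  have hpos' (i : Fin (2 * n)) : 0 ≤ fhalf (w i (bar i)) + fhalf (w (bar i) i) := by
    simpa only [hwt, bar_involutive i, if_true, two_mul_add_two_mul_nonneg_iff] using hpos i
  have hT := tight_closure_consistency_condition_general bar_involutive hint hcl hoct.2 hwT hpos'
  exact ⟨hT.1.1, hT.2⟩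
end

section
/- Let G = (𝒩, w) be a closed integer octagonal graph such that there exists a tightly closed integer octagonal graph w^T that is the tight closure of G (i.e., w^T ⊴ w and every tightly closed integer octagonal graph w′ ⊴ w satisfies w′ ⊴ w^T). Then for all z₁, z₂ ∈ 𝒩 at least one of the following holds: (a) w^T(z₁,z₂) = w(z₁,z₂); (b) w^T(z₁,z₂) = ⌊w(z₁, z̄₁)/2⌋ + ⌊w(z̄₂, z₂)/2⌋. -/
/-!
The tight closure of `w` is the pointwise minimum of `w i j` and
`⌊w i (σ i) / 2⌋ + ⌊w (σ j) j / 2⌋`, where `σ` is the bar involution. Evenness of the unary entries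
and strong closure force every tightly closed graph below `w` to lie below this minimum. Conversely,
`w i (σ i) ≤ w i k + w k (σ k) + w (σ k) (σ i)`, where the outer terms are equal by coherence;
as they are integers, halving and rounding down gives
`⌊w i (σ i) / 2⌋ ≤ w i k + ⌊w k (σ k) / 2⌋`, which is what the triangle inequality for the minimum
requires.
-/

section ExtendedRationals

variable {x y a b : Qinf}

/-- The elements of `ℤ ∪ {+∞}` among the extended rationals. -/
def IsIntOrTop (x : Qinf) : Prop :=
  x = ⊤ ∨ ∃ d : ℤ, x = ((d : ℚ) : Qinf)

/-- The elements of `2ℤ ∪ {+∞}` among the extended rationals. -/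
def IsEvenOrTop (x : Qinf) : Prop :=
  x = ⊤ ∨ ∃ d : ℤ, x = (((2 * d : ℤ) : ℚ) : Qinf)

theorem IsIntOrTop.add (ha : IsIntOrTop a) (hb : IsIntOrTop b) : IsIntOrTop (a + b) := by
  rcases ha with rfl | ⟨d, rfl⟩
  · exact .inl (top_add b)
  rcases hb with rfl | ⟨e, rfl⟩
  · exact .inl (add_top _)
  · exact .inr ⟨d + e, by norm_cast⟩

theorem IsIntOrTop.min (ha : IsIntOrTop a) (hb : IsIntOrTop b) : IsIntOrTop (min a b) := by
  rcases min_choice a b with h | h <;> rwa [h]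

theorem IsIntOrTop.isEvenOrTop_add_self (ha : IsIntOrTop a) : IsEvenOrTop (a + a) := by
  rcases ha with rfl | ⟨d, rfl⟩
  · exact .inl rfl
  · exact .inr ⟨d, by rw [two_mul]; norm_cast⟩

theorem isIntOrTop_fhalf (x : Qinf) : IsIntOrTop (fhalf x) := by
  cases x using WithTop.recTopCoe with
  | top => exact .inl rfl
  | coe q => exact .inr ⟨⌊q / 2⌋, rfl⟩

theorem fhalf_mono : Monotone fhalf :=
  Monotone.withTop_map fun p q hpq => by
    have : p / 2 ≤ q / 2 := by linarith
    exact_mod_cast Int.floor_mono this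

theorem fhalf_add_fhalf_le (x : Qinf) : fhalf x + fhalf x ≤ x := by
  cases x using WithTop.recTopCoe with
  | top => exact le_top
  | coe q =>
    have : (⌊q / 2⌋ : ℚ) + ⌊q / 2⌋ ≤ q := by linarith [Int.floor_le (q / 2)]
    exact WithTop.coe_le_coe.2 this

theorem IsEvenOrTop.fhalf_add_fhalf (hx : IsEvenOrTop x) : fhalf x + fhalf x = x := by
  rcases hx with rfl | ⟨d, rfl⟩
  · rfl
  · have : (⌊((2 * d : ℤ) : ℚ) / 2⌋ : ℚ) + ⌊((2 * d : ℤ) : ℚ) / 2⌋ = (2 * d : ℤ) := by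
      push_cast
      rw [mul_div_cancel_left₀ _ two_ne_zero, Int.floor_intCast, two_mul]
    exact congrArg WithTop.some this

theorem IsIntOrTop.fhalf_add_add_self (ha : IsIntOrTop a) (y : Qinf) :
    fhalf (a + (y + a)) = a + fhalf y := by
  rcases ha with rfl | ⟨d, rfl⟩
  · rfl
  cases y using WithTop.recTopCoe with
  | top => rfl
  | coe q =>
    have : (⌊((d : ℚ) + (q + d)) / 2⌋ : ℚ) = d + ⌊q / 2⌋ := by
      rw [show ((d : ℚ) + (q + d)) / 2 = d + q / 2 by ring, Int.floor_intCast_add, Int.cast_add]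
    exact congrArg WithTop.some this

/-- `two_mul` does not apply, as multiplication in `WithTop ℚ` is not distributive. -/
theorem two_mul_eq_add_self (x : Qinf) : 2 * x = x + x := by
  cases x using WithTop.recTopCoe with
  | top => exact WithTop.mul_top two_ne_zero
  | coe q => exact congrArg WithTop.some (two_mul q)

theorem le_of_add_self_le_add_self (h : x + x ≤ y + y) : x ≤ y := by
  cases y using WithTop.recTopCoe with
  | top => exact le_top
  | coe q =>
    cases x using WithTop.recTopCoe with
    | top => exact absurd h (by simp [← WithTop.coe_add])
    | coe p =>
      norm_cast at h ⊢
      linarith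

end ExtendedRationals

section Paths

variable {N : Type*} {w : N → N → Qinf}

theorem le_pathWeight (hzero : ∀ i, w i i = 0) (htri : ∀ i j k, w i j ≤ w i k + w k j)
    (i : N) (l : List N) : w i ((i :: l).getLast (l.cons_ne_nil i)) ≤ pathWeight w (i :: l) := by
  induction l generalizing i with
  | nil => exact (hzero i).le
  | cons k l ih =>
    rw [List.getLast_cons (l.cons_ne_nil k)]
    exact (htri i _ k).trans (add_le_add_right (ih k) _)

theorem closedG_of_triangle (hzero : ∀ i, w i i = 0) (htri : ∀ i j k, w i j ≤ w i k + w k j) :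
    ClosedG w := by
  refine ⟨?_, hzero, htri⟩
  rintro (_ | ⟨i, l⟩) ⟨-, hends, -⟩
  · exact le_rfl
  · have hlast : i = (i :: l).getLast (l.cons_ne_nil i) := by
      simpa only [List.head?_cons, List.getLast?_eq_getLast_of_ne_nil (l.cons_ne_nil i),
        Option.some.injEq] using hends
    calc 0 = w i i := (hzero i).symm
      _ = w i ((i :: l).getLast (l.cons_ne_nil i)) := congrArg (w i) hlast
      _ ≤ pathWeight w (i :: l) := le_pathWeight hzero htri i l

end Paths

section TightClosure

variable {N : Type*} {σ : N → N} {w v : N → N → Qinf}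

/-- Tightly closed integer octagonal graphs on an arbitrary node set, where a map `σ` plays the role
of `bar`. -/
structure IsTightlyClosed (σ : N → N) (w : N → N → Qinf) : Prop where
  integral : ∀ i j, IsIntOrTop (w i j)
  coherent : ∀ i j, w i j = w (σ j) (σ i)
  closed : ClosedG w
  two_mul_le : ∀ i j, 2 * w i j ≤ w i (σ i) + w (σ j) j
  even : ∀ i, IsEvenOrTop (w i (σ i))

/-- The candidate for the tight closure of `w`: one step of strong coherence with the unary entries
rounded down to even integers. -/
def tighten (σ : N → N) (w : N → N → Qinf) (i j : N) : Qinf :=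
  min (w i j) (fhalf (w i (σ i)) + fhalf (w (σ j) j))

theorem tighten_le (σ : N → N) (w : N → N → Qinf) : tighten σ w ≤ w :=
  fun _ _ => min_le_left _ _

theorem IsTightlyClosed.le_tighten (hv : IsTightlyClosed σ v) (hσ : Function.Involutive σ)
    (hle : v ≤ w) : v ≤ tighten σ w := by
  have unary_le (i : N) : v i (σ i) ≤ fhalf (w i (σ i)) + fhalf (w i (σ i)) := by
    rw [← (hv.even i).fhalf_add_fhalf]
    have := fhalf_mono (hle i (σ i))
    exact add_le_add this this
  intro i j
  refine le_min (hle i j) (le_of_add_self_le_add_self ?_)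
  have unary_le_bar := unary_le (σ j)
  rw [hσ j] at unary_le_bar
  calc v i j + v i j = 2 * v i j := (two_mul_eq_add_self _).symm
    _ ≤ v i (σ i) + v (σ j) j := hv.two_mul_le i j
    _ ≤ fhalf (w i (σ i)) + fhalf (w i (σ i)) + (fhalf (w (σ j) j) + fhalf (w (σ j) j)) :=
      add_le_add (unary_le i) unary_le_bar
    _ = fhalf (w i (σ i)) + fhalf (w (σ j) j) + (fhalf (w i (σ i)) + fhalf (w (σ j) j)) :=
      add_add_add_comm _ _ _ _

theorem tighten_apply_map (hσ : Function.Involutive σ) (i : N) :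
    tighten σ w i (σ i) = fhalf (w i (σ i)) + fhalf (w i (σ i)) := by
  rw [tighten, hσ i, min_eq_right (fhalf_add_fhalf_le _)]

theorem tighten_map_apply (hσ : Function.Involutive σ) (i : N) :
    tighten σ w (σ i) i = fhalf (w (σ i) i) + fhalf (w (σ i) i) := by
  simpa only [hσ i] using tighten_apply_map (w := w) hσ (σ i)

theorem tighten_coherent (hσ : Function.Involutive σ) (hcoh : ∀ i j, w i j = w (σ j) (σ i))
    (i j : N) : tighten σ w i j = tighten σ w (σ j) (σ i) := by
  rw [tighten, tighten, hσ i, hσ j, ← hcoh i j, add_comm]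

theorem two_mul_tighten_le (hσ : Function.Involutive σ) (i j : N) :
    2 * tighten σ w i j ≤ tighten σ w i (σ i) + tighten σ w (σ j) j := by
  rw [tighten_apply_map hσ, tighten_map_apply hσ, two_mul_eq_add_self, add_add_add_comm]
  exact add_le_add (min_le_right _ _) (min_le_right _ _)

section Triangle

variable (hint : ∀ i j, IsIntOrTop (w i j)) (hcoh : ∀ i j, w i j = w (σ j) (σ i))
  (htri : ∀ i j k, w i j ≤ w i k + w k j)

include hint hcoh htri

theorem fhalf_map_right_le (i k : N) : fhalf (w i (σ i)) ≤ w i k + fhalf (w k (σ k)) := by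
  have hpath : w i (σ i) ≤ w i k + (w k (σ k) + w i k) :=
    calc w i (σ i) ≤ w i k + w k (σ i) := htri _ _ _
      _ ≤ w i k + (w k (σ k) + w (σ k) (σ i)) := add_le_add_right (htri _ _ _) _
      _ = w i k + (w k (σ k) + w i k) := by rw [← hcoh i k]
  exact (fhalf_mono hpath).trans_eq ((hint i k).fhalf_add_add_self _)

theorem fhalf_map_left_le (hσ : Function.Involutive σ) (j k : N) :
    fhalf (w (σ j) j) ≤ fhalf (w (σ k) k) + w k j := by
  rw [hcoh k j, add_comm]
  simpa only [hσ j, hσ k] using fhalf_map_right_le hint hcoh htri (σ j) (σ k)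

theorem tighten_triangle (hσ : Function.Involutive σ)
    (hnonneg : ∀ i, 0 ≤ fhalf (w i (σ i)) + fhalf (w (σ i) i)) (i j k : N) :
    tighten σ w i j ≤ tighten σ w i k + tighten σ w k j := by
  have hright := fhalf_map_right_le hint hcoh htri i k
  have hleft := fhalf_map_left_le hint hcoh htri hσ j k
  simp only [tighten, min_add, add_min, le_min_iff]
  refine ⟨⟨min_le_of_left_le (htri i j k), min_le_of_right_le ?_⟩,
    min_le_of_right_le ?_, min_le_of_right_le ?_⟩
  · rw [add_assoc]
    exact add_le_add_right hleft _
  · rw [← add_assoc]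
    exact add_le_add_left hright _
  · calc fhalf (w i (σ i)) + fhalf (w (σ j) j)
        ≤ fhalf (w i (σ i)) + fhalf (w (σ j) j) + (fhalf (w k (σ k)) + fhalf (w (σ k) k)) :=
          le_add_of_nonneg_right (hnonneg k)
      _ = fhalf (w i (σ i)) + fhalf (w (σ k) k) + (fhalf (w k (σ k)) + fhalf (w (σ j) j)) := by
          abel

end Triangle

theorem isTightlyClosed_tighten (hσ : Function.Involutive σ) (hint : ∀ i j, IsIntOrTop (w i j))
    (hcoh : ∀ i j, w i j = w (σ j) (σ i)) (hcl : ClosedG w)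
    (hnonneg : ∀ i, 0 ≤ fhalf (w i (σ i)) + fhalf (w (σ i) i)) :
    IsTightlyClosed σ (tighten σ w) where
  integral i j := (hint i j).min ((isIntOrTop_fhalf _).add (isIntOrTop_fhalf _))
  coherent := tighten_coherent hσ hcoh
  closed := by
    obtain ⟨-, hzero, htri⟩ := hcl
    refine closedG_of_triangle (fun i => ?_) (tighten_triangle hint hcoh htri hσ hnonneg)
    rw [tighten, hzero, min_eq_left (hnonneg i)]
  two_mul_le := two_mul_tighten_le hσ
  even i := by
    rw [tighten_apply_map hσ]
    exact (isIntOrTop_fhalf _).isEvenOrTop_add_self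

theorem isGreatest_tighten (hσ : Function.Involutive σ) (hint : ∀ i j, IsIntOrTop (w i j))
    (hcoh : ∀ i j, w i j = w (σ j) (σ i)) (hcl : ClosedG w)
    (hne : {v | IsTightlyClosed σ v ∧ v ≤ w}.Nonempty) :
    IsGreatest {v | IsTightlyClosed σ v ∧ v ≤ w} (tighten σ w) := by
  obtain ⟨v, hv, hle⟩ := hne
  have hnonneg (i : N) : 0 ≤ fhalf (w i (σ i)) + fhalf (w (σ i) i) :=
    calc 0 = v i i := (hv.closed.2.1 i).symm
      _ ≤ tighten σ w i i := hv.le_tighten hσ hle i i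
      _ ≤ fhalf (w i (σ i)) + fhalf (w (σ i) i) := min_le_right _ _
  exact ⟨⟨isTightlyClosed_tighten hσ hint hcoh hcl hnonneg, tighten_le σ w⟩,
    fun _ hu => hu.1.le_tighten hσ hu.2⟩

end TightClosure

theorem tightlyClosed_iff {n : ℕ} {w : Fin (2 * n) → Fin (2 * n) → Qinf} :
    TightlyClosed w ↔ IsTightlyClosed bar w :=
  ⟨fun ⟨hint, ⟨⟨_, hcoh⟩, hcl, hstr⟩, heven⟩ => ⟨hint, hcoh, hcl, hstr, heven⟩,
    fun ⟨hint, hcoh, hcl, hstr, heven⟩ => ⟨hint, ⟨⟨hcl.1, hcoh⟩, hcl, hstr⟩, heven⟩⟩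

theorem tight_closure_entry_characterization_general {N : Type*} {σ : N → N}
    (hσ : Function.Involutive σ) {w wT : N → N → Qinf} (hint : ∀ i j, IsIntOrTop (w i j))
    (hcoh : ∀ i j, w i j = w (σ j) (σ i)) (hcl : ClosedG w)
    (hT : IsGreatest {v | IsTightlyClosed σ v ∧ v ≤ w} wT) (z₁ z₂ : N) :
    wT z₁ z₂ = min (w z₁ z₂) (fhalf (w z₁ (σ z₁)) + fhalf (w (σ z₂) z₂)) :=
  congrFun₂ (hT.unique (isGreatest_tighten hσ hint hcoh hcl hT.nonempty)) z₁ z₂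

/-- Every entry of the tight closure of a closed integer octagonal
    graph either equals the original entry or equals the tight-coherence
    combination of the tightened unary entries. -/
theorem tight_closure_entry_characterization
    {n : ℕ} (hn : 1 ≤ n) (w : Fin (2 * n) → Fin (2 * n) → Qinf)
    (hoct : Octagonal w) (hint : IntWeights w) (hcl : ClosedG w)
    (wT : Fin (2 * n) → Fin (2 * n) → Qinf)
    (hT : TightlyClosed wT) (hle : GLe wT w)
    (hmax : ∀ w' : Fin (2 * n) → Fin (2 * n) → Qinf,
      TightlyClosed w' → GLe w' w → GLe w' wT) :
    ∀ z₁ z₂ : Fin (2 * n),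
      wT z₁ z₂ = w z₁ z₂ ∨
        wT z₁ z₂ = fhalf (w z₁ (bar z₁)) + fhalf (w (bar z₂) z₂) := by
  intro z₁ z₂
  rw [tight_closure_entry_characterization_general bar_involutive hint hoct.2 hcl
    ⟨⟨tightlyClosed_iff.1 hT, hle⟩, fun w' hw' => hmax w' (tightlyClosed_iff.2 hw'.1) hw'.2⟩]
  exact min_choice _ _
end
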